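/- Let m > 1, n ≥ 1, λ = ((m−1)n + 2)^{−1}, and let 0 < a ≤ 1/4. Set C = a^{λ/2}, U(x,t) = ( C(t+1)^{2λ} − (λ/2)|x|² ) / (t+1), and c(t) = √C (t+1)^{λ−1}. Then for all t with 0 ≤ t ≤ a^{−1} and all x with U(x,t) ≥ 0, one has |DU(x,t)| ≤ c(t) and a·U(x,t) ≤ c(t). -/

import Mathlib

open Real MeasureTheory Metric Set Filter
open scoped RealInnerProductSpace

/-- The spatial Laplacian of a function on `ℝⁿ`, as a sum of second partial derivatives. -/
noncomputable def lapl {n : ℕ} (f : EuclideanSpace ℝ (Fin n) → ℝ)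
    (x : EuclideanSpace ℝ (Fin n)) : ℝ :=
  ∑ i : Fin n, fderiv ℝ (fun y => fderiv ℝ f y (EuclideanSpace.single i 1)) x
    (EuclideanSpace.single i 1)

/-!
`U(·, t)` is a concave paraboloid with gradient `-λ x / (t + 1)`, so on `{U ≥ 0}` its slope is
largest at the free boundary `λ |x|² / 2 = C (t + 1)^{2λ}`, where it equals
`√(2λC) (t + 1)^{λ - 1}`; since `2λ ≤ 1`, this is at most `c(t)`. The height is largest at the
origin, where `a U = (a √C (t + 1)^λ) c(t)`; the bracket is at most `1` because `t + 1 ≤ 1 + a⁻¹`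
and `2λ ≤ 1` give `a² C (t + 1)^{2λ} ≤ a² C (1 + a⁻¹) = a (1 + a) C`.
-/

theorem two_mul_inv_add_two_le_one {k : ℝ} (hk : 0 ≤ k) : 2 * (k + 2)⁻¹ ≤ 1 := by
  rw [← div_eq_mul_inv, div_le_one (by positivity)]
  linarith

theorem mul_one_add_mul_rpow_le_one {a p : ℝ} (ha : 0 ≤ a) (ha_le : a ≤ 1 / 2) (hp : 0 ≤ p) :
    a * (1 + a) * a ^ p ≤ 1 :=
  mul_le_one₀ (by nlinarith) (by positivity) (rpow_le_one ha (by linarith) hp)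

theorem sq_sqrt_mul_rpow {C s : ℝ} (hC : 0 ≤ C) (hs : 0 ≤ s) (p : ℝ) :
    (√C * s ^ p) ^ 2 = C * s ^ (2 * p) := by
  rw [mul_pow, sq_sqrt hC, mul_comm 2 p, rpow_mul hs, rpow_two]

theorem mul_sqrt_mul_rpow_le_one {a C p s : ℝ} (ha : 0 < a) (hC : 0 ≤ C)
    (haC : a * (1 + a) * C ≤ 1) (hp : 0 ≤ p) (hp_le : 2 * p ≤ 1) (hs : 0 ≤ s)
    (hs_le : s ≤ 1 + a⁻¹) : a * (√C * s ^ p) ≤ 1 := by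
  have hinv : 0 < a⁻¹ := inv_pos.mpr ha
  have hpow : s ^ (2 * p) ≤ 1 + a⁻¹ :=
    calc s ^ (2 * p) ≤ (1 + a⁻¹) ^ (2 * p) := by gcongr
      _ ≤ 1 + a⁻¹ := rpow_le_self_of_one_le (by linarith) hp_le
  refine (sq_le_one_iff₀ (by positivity)).mp ?_
  calc (a * (√C * s ^ p)) ^ 2 = a ^ 2 * (C * s ^ (2 * p)) := by
        rw [mul_pow, sq_sqrt_mul_rpow hC hs]
    _ ≤ a ^ 2 * (C * (1 + a⁻¹)) := by gcongr
    _ = a * (1 + a) * C := by field_simp; ring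
    _ ≤ 1 := haC

section Barenblatt

variable {E : Type*} [NormedAddCommGroup E] {lam C a t : ℝ}

/-- The Barenblatt pressure profile started at time `-1`, with similarity exponent `lam` and mass
parameter `C`, not truncated at zero. The exponent, `((m - 1) n + 2)⁻¹` for the porous medium
equation in dimension `n`, is a free parameter, so `E` may be infinite-dimensional. -/
noncomputable def barenblattPressure (lam C : ℝ) (x : E) (t : ℝ) : ℝ :=
  (C * (t + 1) ^ (2 * lam) - lam / 2 * ‖x‖ ^ 2) / (t + 1)

theorem barenblattPressure_nonneg_iff (ht : -1 < t) {x : E} :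
    0 ≤ barenblattPressure lam C x t ↔ lam / 2 * ‖x‖ ^ 2 ≤ C * (t + 1) ^ (2 * lam) := by
  rw [barenblattPressure, le_div_iff₀ (by linarith), zero_mul, sub_nonneg]

theorem barenblattPressure_le (hlam : 0 ≤ lam) (ht : -1 < t) (x : E) :
    barenblattPressure lam C x t ≤ C * (t + 1) ^ (2 * lam) / (t + 1) := by
  have hs : 0 ≤ t + 1 := by linarith
  exact div_le_div_of_nonneg_right (sub_le_self _ (by positivity)) hs

theorem mul_barenblattPressure_le (hlam : 0 ≤ lam) (hlam_le : 2 * lam ≤ 1) (hC : 0 ≤ C)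
    (ha : 0 < a) (haC : a * (1 + a) * C ≤ 1) (ht : -1 < t) (hta : t ≤ a⁻¹) (x : E) :
    a * barenblattPressure lam C x t ≤ √C * (t + 1) ^ (lam - 1) := by
  have hs : 0 < t + 1 := by linarith
  calc a * barenblattPressure lam C x t
      ≤ a * (C * (t + 1) ^ (2 * lam) / (t + 1)) := by
        gcongr
        exact barenblattPressure_le hlam ht x
    _ = a * (√C * (t + 1) ^ lam) * (√C * (t + 1) ^ (lam - 1)) := by
        rw [← sq_sqrt_mul_rpow hC hs.le, rpow_sub_one hs.ne']
        ring
    _ ≤ √C * (t + 1) ^ (lam - 1) :=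
        mul_le_of_le_one_left (by positivity)
          (mul_sqrt_mul_rpow_le_one ha hC haC hlam hlam_le hs.le (by linarith))

variable [InnerProductSpace ℝ E] [CompleteSpace E]

theorem hasGradientAt_barenblattPressure (lam C t : ℝ) (x : E) :
    HasGradientAt (fun y ↦ barenblattPressure lam C y t) (-(lam / (t + 1)) • x) x := by
  rw [hasGradientAt_iff_hasFDerivAt]
  have hderiv := (((hasStrictFDerivAt_norm_sq x).hasFDerivAt.const_mul (lam / 2)).const_sub
    (C * (t + 1) ^ (2 * lam))).mul_const (t + 1)⁻¹
  simp only [barenblattPressure, div_eq_mul_inv _ (t + 1)]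
  refine hderiv.congr_fderiv ?_
  ext y
  simp only [smul_neg, neg_apply, smul_apply, coe_innerSL_apply, nsmul_eq_mul, Nat.cast_ofNat,
    smul_eq_mul, neg_smul, map_neg, map_smul, InnerProductSpace.toDual_apply_apply]
  ring

theorem norm_gradient_barenblattPressure (hlam : 0 ≤ lam) (ht : -1 < t) (x : E) :
    ‖gradient (fun y ↦ barenblattPressure lam C y t) x‖ = lam * ‖x‖ / (t + 1) := by
  have hs : 0 < t + 1 := by linarith
  rw [(hasGradientAt_barenblattPressure lam C t x).gradient, norm_smul, norm_neg,
    norm_of_nonneg (by positivity), div_mul_eq_mul_div]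

theorem norm_gradient_barenblattPressure_le (hlam : 0 ≤ lam) (hC : 0 ≤ C) (ht : -1 < t) {x : E}
    (hx : 0 ≤ barenblattPressure lam C x t) :
    ‖gradient (fun y ↦ barenblattPressure lam C y t) x‖ ≤
      √(2 * lam * C) * (t + 1) ^ (lam - 1) := by
  have hs : 0 < t + 1 := by linarith
  have hsupport := (barenblattPressure_nonneg_iff ht).mp hx
  have hnorm : lam * ‖x‖ ≤ √(2 * lam * C) * (t + 1) ^ lam := by
    refine le_of_sq_le_sq ?_ (by positivity)
    calc (lam * ‖x‖) ^ 2 = 2 * lam * (lam / 2 * ‖x‖ ^ 2) := by ring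
      _ ≤ 2 * lam * (C * (t + 1) ^ (2 * lam)) := by gcongr
      _ = (√(2 * lam * C) * (t + 1) ^ lam) ^ 2 := by
        rw [sq_sqrt_mul_rpow (by positivity) hs.le, mul_assoc (2 * lam)]
  rw [norm_gradient_barenblattPressure hlam ht, rpow_sub_one hs.ne', ← mul_div_assoc]
  gcongr

theorem barenblatt_gradient_height_bounds_general (hlam : 0 ≤ lam) (hlam_le : 2 * lam ≤ 1)
    (hC : 0 ≤ C) (ha : 0 < a) (haC : a * (1 + a) * C ≤ 1) (ht : -1 < t) (hta : t ≤ a⁻¹) {x : E}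
    (hx : 0 ≤ barenblattPressure lam C x t) :
    ‖gradient (fun y ↦ barenblattPressure lam C y t) x‖ ≤ √C * (t + 1) ^ (lam - 1) ∧
      a * barenblattPressure lam C x t ≤ √C * (t + 1) ^ (lam - 1) := by
  have hs : 0 ≤ t + 1 := by linarith
  refine ⟨(norm_gradient_barenblattPressure_le hlam hC ht hx).trans ?_,
    mul_barenblattPressure_le hlam hlam_le hC ha haC ht hta x⟩
  gcongr
  exact mul_le_of_le_one_left hC hlam_le

end Barenblatt

/-- **Gradient and height bounds along the Barenblatt barrier.** With `C = a^{λ/2}` and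
`c(t) = √C (t+1)^{λ−1}`, on the region `{U ≥ 0}` and for `0 ≤ t ≤ a⁻¹` one has
`|DU| ≤ c(t)` and `aU ≤ c(t)`. -/
theorem barenblatt_gradient_height_bounds
    {n : ℕ} (hn : 1 ≤ n) (m : ℝ) (hm : 1 < m)
    (lam a : ℝ) (hlam : lam = ((m - 1) * n + 2)⁻¹) (ha : 0 < a) (ha4 : a ≤ 1 / 4)
    (C : ℝ) (hC : C = a ^ (lam / 2))
    (U : EuclideanSpace ℝ (Fin n) → ℝ → ℝ)
    (hU : ∀ x t, U x t = (C * (t + 1) ^ (2 * lam) - lam / 2 * ‖x‖ ^ 2) / (t + 1))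
    (c : ℝ → ℝ) (hc : ∀ t, c t = Real.sqrt C * (t + 1) ^ (lam - 1)) :
    ∀ (x : EuclideanSpace ℝ (Fin n)) (t : ℝ), 0 ≤ t → t ≤ a⁻¹ → 0 ≤ U x t →
      ‖gradient (fun y => U y t) x‖ ≤ c t ∧ a * U x t ≤ c t := by
  intro x t ht hta hx
  obtain rfl : U = barenblattPressure lam C := funext₂ hU
  have hk : 0 ≤ (m - 1) * n := mul_nonneg (by linarith) n.cast_nonneg
  have hlam_nonneg : 0 ≤ lam := by rw [hlam]; positivity
  have hlam_le : 2 * lam ≤ 1 := hlam ▸ two_mul_inv_add_two_le_one hk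
  have haC : a * (1 + a) * C ≤ 1 :=
    hC ▸ mul_one_add_mul_rpow_le_one ha.le (by linarith) (by positivity)
  rw [hc]
  exact barenblatt_gradient_height_bounds_general hlam_nonneg hlam_le (by rw [hC]; positivity)
    ha haC (by linarith) hta hx
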